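/- arXiv:2101.01005 — 7 statements merged into one kernel-verified Lean document; each statement's English description precedes it below -/
import Mathlib

section
/- Let a, b ≥ 0. The Davis B function q_B(λ) := (1/λ)·(√((λ² + a²)(λ² + b²)) − a·b) is strictly increasing on (0, ∞) (and it is nonnegative and continuous there). -/
/-!
For `λ > 0`, the number `q = q_B(λ)` is nonnegative and solves the quadratic equation
`q² + 2 (ab/λ) q = λ² + a² + b²` (`qB_nonneg`, `qB_quadratic`). As `λ` grows, the right-hand side
strictly increases while the coefficient `ab/λ` does not increase, so the nonnegative root `q`
must strictly increase.
-/

/-- The Davis B reduction function in algebraic form,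
`q_B(λ) = (1/λ)·(√((λ² + a²)(λ² + b²)) − a·b)`. -/
noncomputable def qB (a b lam : ℝ) : ℝ :=
  (1 / lam) * (Real.sqrt ((lam ^ 2 + a ^ 2) * (lam ^ 2 + b ^ 2)) - a * b)

theorem qB_nonneg (a b lam : ℝ) (hl : 0 < lam) : 0 ≤ qB a b lam := by
  have h : a * b ≤ Real.sqrt ((lam ^ 2 + a ^ 2) * (lam ^ 2 + b ^ 2)) := by
    apply Real.le_sqrt_of_sq_le
    nlinarith [sq_nonneg (lam * lam), sq_nonneg (lam * a), sq_nonneg (lam * b)]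
  exact mul_nonneg (by positivity) (sub_nonneg.2 h)

theorem qB_quadratic (a b lam : ℝ) (hl : 0 < lam) :
    qB a b lam ^ 2 + 2 * (a * b / lam) * qB a b lam = lam ^ 2 + a ^ 2 + b ^ 2 := by
  have h : Real.sqrt ((lam ^ 2 + a ^ 2) * (lam ^ 2 + b ^ 2)) ^ 2
      = (lam ^ 2 + a ^ 2) * (lam ^ 2 + b ^ 2) := Real.sq_sqrt (by positivity)
  unfold qB
  field_simp
  linear_combination h

theorem stmt_6 (a b : ℝ) (ha : 0 ≤ a) (hb : 0 ≤ b) :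
    StrictMonoOn (qB a b) (Set.Ioi (0 : ℝ)) ∧
    (∀ lam : ℝ, 0 < lam → 0 ≤ qB a b lam) ∧
    ContinuousOn (qB a b) (Set.Ioi (0 : ℝ)) := by
  refine ⟨?_, fun lam hl => qB_nonneg a b lam hl, ?_⟩
  · intro x hx y hy hxy
    simp only [Set.mem_Ioi] at hx hy
    by_contra! hle
    have hy0 := qB_nonneg a b y hy
    have hcoef : a * b / y ≤ a * b / x := by gcongr
    have hlhs : qB a b y ^ 2 + 2 * (a * b / y) * qB a b y
        ≤ qB a b x ^ 2 + 2 * (a * b / x) * qB a b x := by gcongr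
    rw [qB_quadratic a b x hx, qB_quadratic a b y hy] at hlhs
    nlinarith
  · unfold qB
    refine ContinuousOn.mul ?_ (by fun_prop)
    exact continuousOn_const.div continuousOn_id fun x hx => ne_of_gt hx
end

section
/- Let a, b ≥ 0 and define q_C : (0, ∞) → ℝ by q_C(λ) = √((λ² + a²)(1 + b²)) − a·b if a ≥ λ·b, and q_C(λ) = λ if a ≤ λ·b. Then q_C is well defined (the two formulas agree when a = λ·b), nonnegative, continuous, and monotone nondecreasing on (0, ∞). -/
/-!
Write `g(λ) = √((λ² + a²)(1 + b²)) − a b`. The expansion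
`(λ² + a²)(1 + b²) = (λ + a b)² + (a − λ b)²` drives everything: it gives `λ ≤ g(λ)`, hence
nonnegativity, and `g(λ) = λ` when `a = λ b`, hence agreement of the branches and continuity.
Monotonicity is clear within each branch. If `x b ≤ a ≤ y b`, then `g(x) ≤ y` amounts to
`(x² + a²)(1 + b²) ≤ (y + a b)²`, which follows from `x² b² ≤ a² ≤ a b y` and `x² ≤ y²`.
-/

/-- The Davis C reduction function in algebraic form:
`q_C(λ) = √((λ² + a²)(1 + b²)) − a·b` if `a ≥ λ·b`, and `q_C(λ) = λ` if `a ≤ λ·b`. -/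
noncomputable def qC (a b lam : ℝ) : ℝ :=
  if lam * b ≤ a then Real.sqrt ((lam ^ 2 + a ^ 2) * (1 + b ^ 2)) - a * b else lam

/-- The two branches agree at the switching point. -/
lemma qC_branch_eq {a b lam : ℝ} (ha : 0 ≤ a) (hb : 0 ≤ b) (hl : 0 ≤ lam) (h : a = lam * b) :
    Real.sqrt ((lam ^ 2 + a ^ 2) * (1 + b ^ 2)) - a * b = lam := by
  have e : (lam ^ 2 + a ^ 2) * (1 + b ^ 2) = (lam + a * b) ^ 2 := by subst h; ring
  rw [e, Real.sqrt_sq (by positivity)]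
  ring

lemma le_qC_branch (a b lam : ℝ) :
    lam ≤ Real.sqrt ((lam ^ 2 + a ^ 2) * (1 + b ^ 2)) - a * b := by
  have : lam + a * b ≤ Real.sqrt ((lam ^ 2 + a ^ 2) * (1 + b ^ 2)) :=
    Real.le_sqrt_of_sq_le (by nlinarith [sq_nonneg (a - lam * b)])
  linarith

lemma qC_continuousOn {a b : ℝ} (ha : 0 ≤ a) (hb : 0 ≤ b) :
    ContinuousOn (qC a b) (Set.Ioi (0 : ℝ)) := by
  -- With `|x|` in place of `x` in the second branch the function is continuous on all of `ℝ`;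
  -- without the absolute value the two formulas need not agree wherever `x * b = a`: for
  -- `a = b = 0` this equation also holds at negative `x`, where they give `|x|` and `x`.
  have hc : Continuous fun x : ℝ =>
      if x * b ≤ a then Real.sqrt ((x ^ 2 + a ^ 2) * (1 + b ^ 2)) - a * b else |x| := by
    refine Continuous.if_le (by fun_prop) (by fun_prop) (by fun_prop) (by fun_prop) ?_
    intro x hx
    have h := qC_branch_eq (lam := |x|) ha hb (abs_nonneg x)
      (by rw [← abs_of_nonneg ha, ← hx, abs_mul, abs_of_nonneg hb])
    rwa [sq_abs] at h
  refine hc.continuousOn.congr fun x hx => ?_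
  simp only [qC, abs_of_pos (Set.mem_Ioi.mp hx)]

lemma qC_monotoneOn {a b : ℝ} (ha : 0 ≤ a) (hb : 0 ≤ b) :
    MonotoneOn (qC a b) (Set.Ioi (0 : ℝ)) := by
  intro x hx y hy hxy
  have hx : 0 < x := hx
  have hy : 0 < y := hy
  unfold qC
  split_ifs with h1 h2 h2
  · gcongr
  · have h2 : a ≤ y * b := (not_le.mp h2).le
    have k1 : (x * b) ^ 2 ≤ a ^ 2 := by gcongr
    have k2 : a * a ≤ a * (y * b) := by gcongr
    have k3 : x ^ 2 ≤ y ^ 2 := by gcongr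
    have : Real.sqrt ((x ^ 2 + a ^ 2) * (1 + b ^ 2)) ≤ y + a * b :=
      Real.sqrt_le_iff.mpr ⟨by positivity, by nlinarith⟩
    linarith
  · exact hxy.trans (le_qC_branch a b y)
  · exact hxy

theorem stmt_8 (a b : ℝ) (ha : 0 ≤ a) (hb : 0 ≤ b) :
    (∀ lam : ℝ, 0 < lam → a = lam * b →
      Real.sqrt ((lam ^ 2 + a ^ 2) * (1 + b ^ 2)) - a * b = lam) ∧
    (∀ lam : ℝ, 0 < lam → 0 ≤ qC a b lam) ∧
    ContinuousOn (qC a b) (Set.Ioi (0 : ℝ)) ∧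
    MonotoneOn (qC a b) (Set.Ioi (0 : ℝ)) := by
  refine ⟨fun lam hl h => qC_branch_eq ha hb hl.le h, fun lam hl => ?_,
    qC_continuousOn ha hb, qC_monotoneOn ha hb⟩
  unfold qC
  split_ifs
  · exact hl.le.trans (le_qC_branch a b lam)
  · exact hl.le
end

section
/- Let a, b be real numbers with 0 ≤ b ≤ a. Then for every λ > 0: q_A(λ) ≥ λ, q_B(λ) ≥ λ, and q_C(λ) ≥ λ, where q_A(λ) = λ·(√((1 + a²)(1 + b²)) − a·b), q_B(λ) = (1/λ)·(√((λ² + a²)(λ² + b²)) − a·b), and q_C(λ) = √((λ² + a²)(1 + b²)) − a·b if a ≥ λ·b, q_C(λ) = λ if a ≤ λ·b. -/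
/-!
All three bounds are instances of the Cauchy–Schwarz inequality in the plane,
`x * y + a * b ≤ √((x² + a²) (y² + b²))`: take `(x, y) = (1, 1)` for `q_A`, `(λ, λ)` for `q_B`,
and `(λ, 1)` for `q_C` on the branch `λ b ≤ a`.
-/

/-- The Davis A reduction function `q_A(λ) = λ·(√((1 + a²)(1 + b²)) − a·b)`. -/
noncomputable def qA (a b lam : ℝ) : ℝ :=
  lam * (Real.sqrt ((1 + a ^ 2) * (1 + b ^ 2)) - a * b)

/-- Cauchy–Schwarz for the plane vectors `(x, a)` and `(y, b)`. -/
lemma mul_add_mul_le_sqrt (x y a b : ℝ) :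
    x * y + a * b ≤ Real.sqrt ((x ^ 2 + a ^ 2) * (y ^ 2 + b ^ 2)) := by
  apply Real.le_sqrt_of_sq_le
  nlinarith [sq_nonneg (x * b - y * a)]

theorem stmt_11 (a b : ℝ) (hb : 0 ≤ b) (hba : b ≤ a) :
    ∀ lam : ℝ, 0 < lam →
      lam ≤ qA a b lam ∧ lam ≤ qB a b lam ∧ lam ≤ qC a b lam := by
  intro lam hlam
  refine ⟨?_, ?_, ?_⟩
  · have h := mul_add_mul_le_sqrt 1 1 a b
    rw [one_pow, one_mul] at h
    exact le_mul_of_one_le_right hlam.le (by linarith)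
  · have h := mul_add_mul_le_sqrt lam lam a b
    rw [qB, one_div_mul_eq_div, le_div_iff₀ hlam]
    linarith
  · have h := mul_add_mul_le_sqrt lam 1 a b
    rw [one_pow, mul_one] at h
    unfold qC
    split_ifs
    · linarith
    · exact le_rfl
end

section
/- Let a, b be real numbers with 0 ≤ b ≤ a. Then for every λ ≥ 1: q_A(λ) ≥ q_B(λ) ≥ q_C(λ), where q_A(λ) = λ·(√((1 + a²)(1 + b²)) − a·b), q_B(λ) = (1/λ)·(√((λ² + a²)(λ² + b²)) − a·b), and q_C(λ) = √((λ² + a²)(1 + b²)) − a·b if a ≥ λ·b, q_C(λ) = λ if a ≤ λ·b. -/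
/-- Cauchy-Schwarz for the vectors `(l, a)` and `(l, b)`. -/
theorem add_mul_le_sqrt (a b l : ℝ) :
    l ^ 2 + a * b ≤ Real.sqrt ((l ^ 2 + a ^ 2) * (l ^ 2 + b ^ 2)) :=
  Real.le_sqrt_of_sq_le (by nlinarith [sq_nonneg (l * (a - b))])

/-- The inequality `q_B ≤ q_A` multiplied by `l`. -/
theorem sqrt_le_qA_form (a b l : ℝ) (hp : 0 ≤ a * b) (hl : 1 ≤ l) :
    Real.sqrt ((l ^ 2 + a ^ 2) * (l ^ 2 + b ^ 2)) - a * b ≤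
      l ^ 2 * (Real.sqrt ((1 + a ^ 2) * (1 + b ^ 2)) - a * b) := by
  have hS2 : Real.sqrt ((1 + a ^ 2) * (1 + b ^ 2)) ^ 2 = (1 + a ^ 2) * (1 + b ^ 2) :=
    Real.sq_sqrt (by positivity)
  have hS : 1 + a * b ≤ Real.sqrt ((1 + a ^ 2) * (1 + b ^ 2)) := by
    simpa using add_mul_le_sqrt a b 1
  generalize Real.sqrt ((1 + a ^ 2) * (1 + b ^ 2)) = S at hS2 hS ⊢
  have hL : 0 ≤ l ^ 2 - 1 := by nlinarith
  have key : 0 ≤ l ^ 2 * (l ^ 2 - 1) * ((S - a * b) ^ 2 - 1) :=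
    mul_nonneg (by positivity) (by nlinarith)
  have h : Real.sqrt ((l ^ 2 + a ^ 2) * (l ^ 2 + b ^ 2)) ≤ l ^ 2 * (S - a * b) + a * b := by
    refine Real.sqrt_le_iff.mpr ⟨?_, ?_⟩
    · have : 0 ≤ l ^ 2 * (S - a * b) := mul_nonneg (by positivity) (by linarith)
      linarith
    · linear_combination key - l ^ 2 * hS2
  linarith

/-- The inequality `q_C ≤ q_B` multiplied by `l`, on the branch `l * b ≤ a`. -/
theorem qC_form_le_sqrt (a b l : ℝ) (hb : 0 ≤ b) (hba : b ≤ a) (hl : 1 ≤ l) (h : l * b ≤ a) :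
    l * (Real.sqrt ((l ^ 2 + a ^ 2) * (1 + b ^ 2)) - a * b) ≤
      Real.sqrt ((l ^ 2 + a ^ 2) * (l ^ 2 + b ^ 2)) - a * b := by
  have ha : 0 ≤ a := hb.trans hba
  have hV2 : Real.sqrt ((l ^ 2 + a ^ 2) * (1 + b ^ 2)) ^ 2 = (l ^ 2 + a ^ 2) * (1 + b ^ 2) :=
    Real.sq_sqrt (by positivity)
  have hU2 : Real.sqrt ((l ^ 2 + a ^ 2) * (l ^ 2 + b ^ 2)) ^ 2 =
      (l ^ 2 + a ^ 2) * (l ^ 2 + b ^ 2) := Real.sq_sqrt (by positivity)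
  have hU := Real.sqrt_nonneg ((l ^ 2 + a ^ 2) * (l ^ 2 + b ^ 2))
  generalize Real.sqrt ((l ^ 2 + a ^ 2) * (1 + b ^ 2)) = V at hV2 ⊢
  generalize Real.sqrt ((l ^ 2 + a ^ 2) * (l ^ 2 + b ^ 2)) = U at hU2 hU ⊢
  -- sum of `l * b ≤ a` and `b ≤ a`, squared
  have h1 : ((l + 1) * b) ^ 2 ≤ (2 * a) ^ 2 :=
    pow_le_pow_left₀ (by positivity) (by linarith) 2
  have h2 : l * b * b ≤ a * a := mul_le_mul h hba hb ha
  have h3 : b * ((l + 1) * l ^ 2 + 2 * a ^ 2) ≤ 2 * a * U := by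
    refine (abs_le_of_sq_le_sq' ?_ (by positivity)).2
    linear_combination l ^ 4 * h1 + 4 * a ^ 2 * l ^ 2 * h2 - 4 * a ^ 2 * hU2
  have hl1 : 0 ≤ l - 1 := by linarith
  have h4 : l * V ≤ U + (l - 1) * (a * b) := by
    refine (abs_le_of_sq_le_sq' ?_ (by positivity)).2
    linear_combination ((l - 1) * b) * h3 + l ^ 2 * hV2 - hU2
  linarith

theorem stmt_13 (a b : ℝ) (hb : 0 ≤ b) (hba : b ≤ a) :
    ∀ lam : ℝ, 1 ≤ lam →
      qC a b lam ≤ qB a b lam ∧ qB a b lam ≤ qA a b lam := by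
  intro l hl
  have hl0 : 0 < l := by linarith
  have hB : qB a b l = (Real.sqrt ((l ^ 2 + a ^ 2) * (l ^ 2 + b ^ 2)) - a * b) / l := by
    rw [qB]; ring
  rw [hB]
  constructor
  · rw [le_div_iff₀ hl0, qC]
    split_ifs with h
    · linarith [qC_form_le_sqrt a b l hb hba hl h]
    · linarith [add_mul_le_sqrt a b l]
  · rw [div_le_iff₀ hl0, qA]
    linarith [sqrt_le_qA_form a b l (mul_nonneg (hb.trans hba) hb) hl]
end

section
/- Let a, b be real numbers with 0 ≤ b ≤ a. Then for every λ with 0 < λ ≤ 1: q_C(λ) ≥ q_B(λ) ≥ q_A(λ), where q_A(λ) = λ·(√((1 + a²)(1 + b²)) − a·b), q_B(λ) = (1/λ)·(√((λ² + a²)(λ² + b²)) − a·b), and q_C(λ) = √((λ² + a²)(1 + b²)) − a·b if a ≥ λ·b, q_C(λ) = λ if a ≤ λ·b. -/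
theorem stmt_14 (a b : ℝ) (hb : 0 ≤ b) (hba : b ≤ a) :
    ∀ lam : ℝ, 0 < lam → lam ≤ 1 →
      qA a b lam ≤ qB a b lam ∧ qB a b lam ≤ qC a b lam := by
  intro l hl hl1
  have hlb : l * b ≤ a := by nlinarith
  have ha : 0 ≤ a := hb.trans hba
  have hl2 : l ^ 2 ≤ 1 := by nlinarith
  unfold qA qB qC
  rw [if_pos hlb, Real.sqrt_mul (by positivity), Real.sqrt_mul (by positivity),
    Real.sqrt_mul (by positivity)]
  have hR2 : √(1 + a ^ 2) ^ 2 = 1 + a ^ 2 := Real.sq_sqrt (by positivity)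
  have hW2 : √(1 + b ^ 2) ^ 2 = 1 + b ^ 2 := Real.sq_sqrt (by positivity)
  have hP2 : √(l ^ 2 + a ^ 2) ^ 2 = l ^ 2 + a ^ 2 := Real.sq_sqrt (by positivity)
  have hU2 : √(l ^ 2 + b ^ 2) ^ 2 = l ^ 2 + b ^ 2 := Real.sq_sqrt (by positivity)
  have hW : 0 < √(1 + b ^ 2) := Real.sqrt_pos.2 (by positivity)
  have hP : 0 < √(l ^ 2 + a ^ 2) := Real.sqrt_pos.2 (by positivity)
  have hU : 0 < √(l ^ 2 + b ^ 2) := Real.sqrt_pos.2 (by positivity)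
  have hUW : √(l ^ 2 + b ^ 2) ≤ √(1 + b ^ 2) := Real.sqrt_le_sqrt (by linarith)
  generalize √(1 + a ^ 2) = R at *
  generalize √(1 + b ^ 2) = W at *
  generalize √(l ^ 2 + a ^ 2) = P at *
  generalize √(l ^ 2 + b ^ 2) = U at *
  rw [one_div_mul_eq_div]
  constructor
  · rw [le_div_iff₀ hl]
    have key : l ^ 2 * (R * W) + (1 - l ^ 2) * (a * b) ≤ P * U := by
      refine abs_le_of_sq_le_sq' ?_ (by positivity) |>.2
      have h : 0 ≤ l ^ 2 * (1 - l ^ 2) * (R * b - W * a) ^ 2 :=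
        mul_nonneg (mul_nonneg (sq_nonneg l) (by linarith)) (sq_nonneg _)
      have e : (P * U) ^ 2 - (l ^ 2 * (R * W) + (1 - l ^ 2) * (a * b)) ^ 2
          = l ^ 2 * (1 - l ^ 2) * (R * b - W * a) ^ 2 := by
        have h1 : (P * U) ^ 2 = (l ^ 2 + a ^ 2) * (l ^ 2 + b ^ 2) := by
          rw [mul_pow, hP2, hU2]
        have h2 : (R * W) ^ 2 = (1 + a ^ 2) * (1 + b ^ 2) := by
          rw [mul_pow, hR2, hW2]
        linear_combination h1 - l ^ 4 * h2 - l ^ 2 * (1 - l ^ 2) * (b ^ 2 * hR2 + a ^ 2 * hW2)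
      linarith
    linarith
  · rw [div_le_iff₀ hl]
    have hPb : P * b ≤ a * U := by
      refine abs_le_of_sq_le_sq' ?_ (by positivity) |>.2
      rw [mul_pow, mul_pow, hP2, hU2]
      have : l ^ 2 * b ^ 2 ≤ l ^ 2 * a ^ 2 := by gcongr
      linarith
    have hsum : P * b * (1 + l) ≤ a * (U + l * W) := by
      have h1 : l * (P * b) ≤ l * (a * U) := by gcongr
      have h2 : l * (a * U) ≤ l * (a * W) := by gcongr
      linarith
    have key : P * (U - l * W) ≤ a * b * (1 - l) := by
      have hpos : 0 < U + l * W := by positivity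
      refine le_of_mul_le_mul_right ?_ hpos
      have h := mul_le_mul_of_nonneg_left hsum (mul_nonneg hb (sub_nonneg.2 hl1))
      have e : P * (U - l * W) * (U + l * W) = b * (1 - l) * (P * b * (1 + l)) := by
        linear_combination P * hU2 - P * l ^ 2 * hW2
      linarith
    linarith
end

section
/- Let Ω be a set and S a set of functions σ : Ω → ℝ × ℝ such that every σ ∈ S satisfies (σ x).1 ≥ (σ x).2 for all x ∈ Ω. Fix a ≥ b ≥ 0 and c′ ∈ ℝ, and let λ*_A, λ*_B, λ*_C be the OPT-SSR safety factors for the Davis A–C reduction functions q_A, q_B, q_C. Assume the admissible sets of q_A, q_B and q_C are each nonempty and bounded above. Then either 1 ≤ λ*_A ≤ λ*_B ≤ λ*_C or λ*_C ≤ λ*_B ≤ λ*_A ≤ 1. In particular, if one of the three values λ*_A, λ*_B, λ*_C equals 1, then all three equal 1. -/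
/-!
Since `Φ` is nondecreasing in `|λ|` on stresses with `s₃ ≤ s₁`, whether `λ` is admissible for `q`
depends only on `q λ`, and monotonically so (`Adm.of_le`). All three reduction functions take the
same value `k = q_A 1` at `1`, and `q_C ≤ q_B ≤ q_A` on `[1, ∞)`, `q_A ≤ q_B ≤ q_C` on `(0, 1]`.

If `1` is admissible, then all three suprema are at least `1`, they are determined by parameters
`λ ≥ 1`, and the first chain of inequalities orders them. If `1` is not admissible, then, since
`q ≥ k` on `[1, ∞)`, all admissible parameters are below `1`, and the second chain orders them.

The orderings come from two one-variable monotonicity facts. With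
`g t = √((λ² + a²)(1 + t²)) - a t`, which is nonincreasing for `λ t ≤ a` with minimum value `λ`, one
has `q_B λ = g (b / λ)` and `q_C λ = g (min b (a / λ))`. With
`f u = √((1 + a² u)(1 + b² u)) - a b u`, nondecreasing on `[0, ∞)`, one has
`q_B λ = λ f (1 / λ²)` and `q_A λ = λ f 1`.

For the final claim it suffices that `λ*_C > 1` forces `λ*_A > 1` and that `λ*_C < 1` forces
`λ*_A ≠ 1`. Both follow from the linearity of `q_A` and the strict inequalities `q_C > k` on
`(1, ∞)`, `q_C < k` on `(0, 1)`.
-/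

/-- The Mohr–Coulomb function `Φ(λ; s₁, s₃) = (s₁ − s₃)·√(λ² + a²) + (s₁ + s₃)·a − 2c′`. -/
noncomputable def Phi (a c' lam s1 s3 : ℝ) : ℝ :=
  (s1 - s3) * Real.sqrt (lam ^ 2 + a ^ 2) + (s1 + s3) * a - 2 * c'

/-- The set of admissible reduction parameters for the OPT-SSR problem with
reduction function `q`. -/
def Adm {Ω : Type*} (S : Set (Ω → ℝ × ℝ)) (a c' : ℝ) (q : ℝ → ℝ) : Set ℝ :=
  {lam : ℝ | 0 < lam ∧ ∃ σ ∈ S, ∀ x : Ω, Phi a c' (q lam) (σ x).1 (σ x).2 ≤ 0}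

/-- Admissibility transfers downwards along the values of the reduction functions. -/
lemma Adm.of_le {Ω : Type*} {S : Set (Ω → ℝ × ℝ)}
    (hS : ∀ σ ∈ S, ∀ x : Ω, (σ x).2 ≤ (σ x).1) {a c' : ℝ} {p q : ℝ → ℝ} {l m : ℝ}
    (hl : l ∈ Adm S a c' q) (hm : 0 < m) (h0 : 0 ≤ p m) (h : p m ≤ q l) :
    m ∈ Adm S a c' p := by
  obtain ⟨-, σ, hσ, H⟩ := hl
  refine ⟨hm, σ, hσ, fun x => le_trans ?_ (H x)⟩
  have h1 : 0 ≤ (σ x).1 - (σ x).2 := sub_nonneg.2 (hS σ hσ x)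
  unfold Phi
  gcongr

/-- The function `t ↦ √((l² + a²)(1 + t²)) - a t` is nonincreasing as long as `l t ≤ a`. -/
lemma g_anti {a l s t : ℝ} (hl : 0 < l) (hs : 0 ≤ s) (hst : s ≤ t) (ht : l * t ≤ a) :
    √((l ^ 2 + a ^ 2) * (1 + t ^ 2)) - a * t ≤ √((l ^ 2 + a ^ 2) * (1 + s ^ 2)) - a * s := by
  have ha : 0 ≤ a := le_trans (by have := hs.trans hst; positivity) ht
  -- Each of the two roots `R` satisfies `(l² + a²) r ≤ a R`.
  have key : ∀ r, 0 ≤ r → r ≤ t → (l ^ 2 + a ^ 2) * r ≤ a * √((l ^ 2 + a ^ 2) * (1 + r ^ 2)) := by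
    intro r hr hrt
    have h1 : l * r ≤ a := le_trans (by gcongr) ht
    have h2 : (l * r) ^ 2 ≤ a ^ 2 := by gcongr
    apply le_of_sq_le_sq _ (by positivity)
    rw [mul_pow a, Real.sq_sqrt (by positivity)]
    have : 0 ≤ (l ^ 2 + a ^ 2) * (a ^ 2 - (l * r) ^ 2) := mul_nonneg (by positivity) (by linarith)
    nlinarith
  have k1 := key s hs hst
  have k2 := key t (hs.trans hst) le_rfl
  have hX : √((l ^ 2 + a ^ 2) * (1 + t ^ 2)) ^ 2 = (l ^ 2 + a ^ 2) * (1 + t ^ 2) :=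
    Real.sq_sqrt (by positivity)
  have hY : √((l ^ 2 + a ^ 2) * (1 + s ^ 2)) ^ 2 = (l ^ 2 + a ^ 2) * (1 + s ^ 2) :=
    Real.sq_sqrt (by positivity)
  have hX0 : 0 < √((l ^ 2 + a ^ 2) * (1 + t ^ 2)) := Real.sqrt_pos.2 (by positivity)
  have hY0 : 0 < √((l ^ 2 + a ^ 2) * (1 + s ^ 2)) := Real.sqrt_pos.2 (by positivity)
  set X := √((l ^ 2 + a ^ 2) * (1 + t ^ 2))
  set Y := √((l ^ 2 + a ^ 2) * (1 + s ^ 2))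
  by_contra! hc
  have h3 : (X + Y) * (a * (t - s)) < (X + Y) * (X - Y) :=
    mul_lt_mul_of_pos_left (by linarith) (by linarith)
  have h4 : 0 ≤ (t - s) * (a * (X + Y) - (l ^ 2 + a ^ 2) * (t + s)) :=
    mul_nonneg (by linarith) (by linarith)
  nlinarith

/-- The function `t ↦ √((l² + a²)(1 + t²)) - a t` is bounded below by `l`, by Cauchy–Schwarz. -/
lemma le_g (a l t : ℝ) : l ≤ √((l ^ 2 + a ^ 2) * (1 + t ^ 2)) - a * t := by
  have : l + a * t ≤ √((l ^ 2 + a ^ 2) * (1 + t ^ 2)) :=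
    Real.le_sqrt_of_sq_le (by nlinarith [sq_nonneg (l * t - a)])
  linarith

/-- The function `u ↦ √((1 + a² u)(1 + b² u)) - a b u` is nondecreasing on `[0, ∞)`. -/
lemma f_mono {a b u v : ℝ} (hu : 0 ≤ u) (huv : u ≤ v) :
    √((1 + a ^ 2 * u) * (1 + b ^ 2 * u)) - a * b * u ≤
      √((1 + a ^ 2 * v) * (1 + b ^ 2 * v)) - a * b * v := by
  have hX : √((1 + a ^ 2 * u) * (1 + b ^ 2 * u)) ^ 2 = (1 + a ^ 2 * u) * (1 + b ^ 2 * u) :=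
    Real.sq_sqrt (by positivity)
  have hX0 := Real.sqrt_nonneg ((1 + a ^ 2 * u) * (1 + b ^ 2 * u))
  set X := √((1 + a ^ 2 * u) * (1 + b ^ 2 * u))
  -- The arithmetic–geometric mean inequality for `a² (1 + b² u)` and `b² (1 + a² u)`.
  have hamgm : 2 * (a * b) * X ≤ a ^ 2 + b ^ 2 + 2 * a ^ 2 * b ^ 2 * u := by
    apply le_of_sq_le_sq _ (by positivity)
    rw [mul_pow _ X, hX]
    nlinarith [sq_nonneg (a ^ 2 - b ^ 2)]
  have : X + a * b * (v - u) ≤ √((1 + a ^ 2 * v) * (1 + b ^ 2 * v)) := by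
    apply Real.le_sqrt_of_sq_le
    have := mul_nonneg (sub_nonneg.2 huv) (sub_nonneg.2 hamgm)
    nlinarith
  linarith

lemma qB_eq_g {a b l : ℝ} (hl : 0 < l) :
    qB a b l = √((l ^ 2 + a ^ 2) * (1 + (b / l) ^ 2)) - a * (b / l) := by
  have : (l ^ 2 + a ^ 2) * (l ^ 2 + b ^ 2) =
      l ^ 2 * ((l ^ 2 + a ^ 2) * (1 + (b / l) ^ 2)) := by field_simp
  rw [qB, this, Real.sqrt_mul (by positivity), Real.sqrt_sq hl.le]
  field_simp

lemma qB_eq_f {a b l : ℝ} (hl : 0 < l) :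
    qB a b l = l * (√((1 + a ^ 2 * (1 / l ^ 2)) * (1 + b ^ 2 * (1 / l ^ 2))) -
      a * b * (1 / l ^ 2)) := by
  have : (l ^ 2 + a ^ 2) * (l ^ 2 + b ^ 2) =
      (l ^ 2) ^ 2 * ((1 + a ^ 2 * (1 / l ^ 2)) * (1 + b ^ 2 * (1 / l ^ 2))) := by field_simp
  rw [qB, this, Real.sqrt_mul (by positivity), Real.sqrt_sq (by positivity)]
  field_simp

lemma qA_eq_f (a b l : ℝ) :
    qA a b l = l * (√((1 + a ^ 2 * 1) * (1 + b ^ 2 * 1)) - a * b * 1) := by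
  simp [qA]

lemma qA_eq_mul (a b l : ℝ) : qA a b l = l * qA a b 1 := by simp [qA]

lemma one_le_qA_one (a b : ℝ) : 1 ≤ qA a b 1 := by
  simpa [qA] using le_g a 1 b

lemma qB_one (a b : ℝ) : qB a b 1 = qA a b 1 := by simp [qA, qB]

lemma qC_one {a b : ℝ} (hba : b ≤ a) : qC a b 1 = qA a b 1 := by simp [qA, qC, hba]

lemma le_qB {a b l : ℝ} (hl : 0 < l) : l ≤ qB a b l := by
  rw [qB_eq_g hl]; exact le_g _ _ _

lemma le_qC (a b l : ℝ) : l ≤ qC a b l := by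
  unfold qC
  split_ifs
  · exact le_g _ _ _
  · exact le_rfl

lemma qB_le_qA {a b l : ℝ} (hl : 1 ≤ l) : qB a b l ≤ qA a b l := by
  have h0 : 0 < l := by linarith
  rw [qB_eq_f h0, qA_eq_f]
  refine mul_le_mul_of_nonneg_left (f_mono (by positivity) ?_) h0.le
  rw [div_le_one (by positivity)]
  exact one_le_pow₀ hl

lemma qA_le_qB {a b l : ℝ} (h0 : 0 < l) (hl : l ≤ 1) :
    qA a b l ≤ qB a b l := by
  rw [qB_eq_f h0, qA_eq_f]
  refine mul_le_mul_of_nonneg_left (f_mono zero_le_one ?_) h0.le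
  rw [le_div_iff₀ (by positivity), one_mul]
  exact pow_le_one₀ h0.le hl

lemma qC_le_qB {a b l : ℝ} (hb : 0 ≤ b) (hl : 1 ≤ l) : qC a b l ≤ qB a b l := by
  have h0 : 0 < l := by linarith
  unfold qC
  split_ifs with h
  · rw [qB_eq_g h0]
    exact g_anti h0 (by positivity) (div_le_self hb hl) h
  · exact le_qB h0

lemma qB_le_qC {a b l : ℝ} (hb : 0 ≤ b) (hba : b ≤ a) (h0 : 0 < l) (hl : l ≤ 1) :
    qB a b l ≤ qC a b l := by
  have h : l * b ≤ a := le_trans (mul_le_of_le_one_left hb hl) hba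
  rw [qC, if_pos h, qB_eq_g h0]
  refine g_anti h0 hb ?_ ?_
  · rw [le_div_iff₀ h0]
    exact mul_le_of_le_one_right hb hl
  · rwa [mul_div_cancel₀ _ h0.ne']

lemma lt_qC {a b l : ℝ} (hb : 0 ≤ b) (hba : b ≤ a) (hl : 1 < l) : qA a b 1 < qC a b l := by
  have hl2 : 1 < l ^ 2 := one_lt_pow₀ hl two_ne_zero
  unfold qA qC
  rw [one_mul]
  split_ifs with h
  · refine sub_lt_sub_right (Real.sqrt_lt_sqrt (by positivity) ?_) _
    gcongr
  · push Not at h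
    have ha : 0 ≤ a := hb.trans hba
    have : √((1 + a ^ 2) * (1 + b ^ 2)) < l + a * b := by
      rw [Real.sqrt_lt' (by positivity)]
      -- Both `a²` and `b²` are at most `a (l b)`.
      have h1 : a * a ≤ a * (l * b) := by gcongr
      have h2 : b * b ≤ a * (l * b) := le_trans (by gcongr) h1
      nlinarith
    linarith

lemma qC_lt {a b l : ℝ} (hb : 0 ≤ b) (hba : b ≤ a) (h0 : 0 < l) (hl : l < 1) :
    qC a b l < qA a b 1 := by
  have h : l * b ≤ a := le_trans (mul_le_of_le_one_left hb hl.le) hba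
  have hl2 : l ^ 2 < 1 := pow_lt_one₀ h0.le hl two_ne_zero
  rw [qC, if_pos h, qA, one_mul]
  refine sub_lt_sub_right (Real.sqrt_lt_sqrt (by positivity) ?_) _
  gcongr

theorem stmt_16 {Ω : Type*} (S : Set (Ω → ℝ × ℝ))
    (hS : ∀ σ ∈ S, ∀ x : Ω, (σ x).2 ≤ (σ x).1)
    (a b c' : ℝ) (hb : 0 ≤ b) (hba : b ≤ a)
    (hA : (Adm S a c' (qA a b)).Nonempty) (hAbdd : BddAbove (Adm S a c' (qA a b)))
    (hB : (Adm S a c' (qB a b)).Nonempty) (hBbdd : BddAbove (Adm S a c' (qB a b)))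
    (hC : (Adm S a c' (qC a b)).Nonempty) (hCbdd : BddAbove (Adm S a c' (qC a b))) :
    ((1 ≤ sSup (Adm S a c' (qA a b)) ∧
      sSup (Adm S a c' (qA a b)) ≤ sSup (Adm S a c' (qB a b)) ∧
      sSup (Adm S a c' (qB a b)) ≤ sSup (Adm S a c' (qC a b))) ∨
     (sSup (Adm S a c' (qC a b)) ≤ sSup (Adm S a c' (qB a b)) ∧
      sSup (Adm S a c' (qB a b)) ≤ sSup (Adm S a c' (qA a b)) ∧
      sSup (Adm S a c' (qA a b)) ≤ 1)) ∧
    ((sSup (Adm S a c' (qA a b)) = 1 ∨ sSup (Adm S a c' (qB a b)) = 1 ∨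
        sSup (Adm S a c' (qC a b)) = 1) →
      (sSup (Adm S a c' (qA a b)) = 1 ∧ sSup (Adm S a c' (qB a b)) = 1 ∧
        sSup (Adm S a c' (qC a b)) = 1)) := by
  have hk := one_le_qA_one a b
  have hk0 : 0 < qA a b 1 := by linarith
  have hA0 : ∀ l, 0 < l → 0 ≤ qA a b l := fun l hl => by rw [qA_eq_mul]; positivity
  have hB0 : ∀ l, 0 < l → 0 ≤ qB a b l := fun l hl => hl.le.trans (le_qB hl)
  have hC0 : ∀ l, 0 < l → 0 ≤ qC a b l := fun l hl => hl.le.trans (le_qC a b l)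
  have hup : 1 < sSup (Adm S a c' (qC a b)) → 1 < sSup (Adm S a c' (qA a b)) := by
    intro h
    obtain ⟨l, hl, h1⟩ := exists_lt_of_lt_csSup hC h
    -- The parameter at which the linear function `q_A` takes the value `q_C l`.
    have hm : 1 < qC a b l / qA a b 1 := (one_lt_div hk0).2 (lt_qC hb hba h1)
    have hmA : qC a b l / qA a b 1 ∈ Adm S a c' (qA a b) := by
      refine Adm.of_le hS hl (by linarith) (hA0 _ (by linarith)) ?_
      rw [qA_eq_mul, div_mul_cancel₀ _ hk0.ne']
    exact hm.trans_le (le_csSup hAbdd hmA)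
  have hdown : sSup (Adm S a c' (qC a b)) < 1 → sSup (Adm S a c' (qA a b)) ≠ 1 := by
    intro h hA1
    have hs0 : 0 ≤ sSup (Adm S a c' (qC a b)) := Real.sSup_nonneg fun l hl => hl.1.le
    obtain ⟨m, hm, hm1⟩ := exists_between h
    have hm0 : 0 < m := hs0.trans_lt hm
    have hlt : qC a b m / qA a b 1 < sSup (Adm S a c' (qA a b)) := by
      rw [hA1]
      exact (div_lt_one hk0).2 (qC_lt hb hba hm0 hm1)
    obtain ⟨l, hl, hl1⟩ := exists_lt_of_lt_csSup hA hlt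
    have hmC : m ∈ Adm S a c' (qC a b) := by
      refine Adm.of_le hS hl hm0 (hC0 _ hm0) ?_
      rw [qA_eq_mul]
      exact ((div_lt_iff₀ hk0).1 hl1).le
    exact hm.not_ge (le_csSup hCbdd hmC)
  have main : (1 ≤ sSup (Adm S a c' (qA a b)) ∧
      sSup (Adm S a c' (qA a b)) ≤ sSup (Adm S a c' (qB a b)) ∧
      sSup (Adm S a c' (qB a b)) ≤ sSup (Adm S a c' (qC a b))) ∨
     (sSup (Adm S a c' (qC a b)) ≤ sSup (Adm S a c' (qB a b)) ∧
      sSup (Adm S a c' (qB a b)) ≤ sSup (Adm S a c' (qA a b)) ∧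
      sSup (Adm S a c' (qA a b)) ≤ 1) := by
    by_cases h1 : (1 : ℝ) ∈ Adm S a c' (qA a b)
    · left
      have h1B : (1 : ℝ) ∈ Adm S a c' (qB a b) :=
        Adm.of_le hS h1 one_pos (hB0 1 one_pos) (qB_one a b).le
      have h1C : (1 : ℝ) ∈ Adm S a c' (qC a b) :=
        Adm.of_le hS h1 one_pos (hC0 1 one_pos) (qC_one hba).le
      refine ⟨le_csSup hAbdd h1, csSup_le hA fun l hl => ?_, csSup_le hB fun l hl => ?_⟩
      · rcases le_total 1 l with h | h
        · exact le_csSup hBbdd (Adm.of_le hS hl hl.1 (hB0 l hl.1) (qB_le_qA h))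
        · exact h.trans (le_csSup hBbdd h1B)
      · rcases le_total 1 l with h | h
        · exact le_csSup hCbdd (Adm.of_le hS hl hl.1 (hC0 l hl.1) (qC_le_qB hb h))
        · exact h.trans (le_csSup hCbdd h1C)
    · right
      have hCk : ∀ l, 1 ≤ l → qA a b 1 ≤ qC a b l := by
        intro l hl
        rcases hl.eq_or_lt with rfl | hl
        · exact (qC_one hba).ge
        · exact (lt_qC hb hba hl).le
      have le_one : ∀ q : ℝ → ℝ, (∀ l, 1 ≤ l → qA a b 1 ≤ q l) →
          ∀ l ∈ Adm S a c' q, l ≤ 1 := by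
        intro q hq l hl
        by_contra! h
        exact h1 (Adm.of_le hS hl one_pos hk0.le (hq l h.le))
      refine ⟨csSup_le hC fun l hl => ?_, csSup_le hB fun l hl => ?_, csSup_le hA fun l hl => ?_⟩
      · have := le_one _ hCk l hl
        exact le_csSup hBbdd (Adm.of_le hS hl hl.1 (hB0 l hl.1) (qB_le_qC hb hba hl.1 this))
      · have := le_one _ (fun l hl => (hCk l hl).trans (qC_le_qB hb hl)) l hl
        exact le_csSup hAbdd (Adm.of_le hS hl hl.1 (hA0 l hl.1) (qA_le_qB hl.1 this))
      · exact le_one _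
          (fun l hl => ((hCk l hl).trans (qC_le_qB hb hl)).trans (qB_le_qA hl)) l hl
  refine ⟨main, fun h => ?_⟩
  -- Whichever value equals `1`, the outer two are squeezed by `hup` and `hdown`.
  have hC1 : sSup (Adm S a c' (qC a b)) = 1 := by
    rcases lt_trichotomy (sSup (Adm S a c' (qC a b))) 1 with hlt | heq | hgt
    · exfalso
      have := hdown hlt
      grind
    · exact heq
    · exfalso
      have := hup hgt
      grind
  grind
end

section
/- Let H be a real normed space and K : [0, ∞) → Set H an antitone family of subsets (λ ≤ μ implies K(μ) ⊆ K(λ)). Assume the set A := { λ ≥ 0 : K(λ) is nonempty } is nonempty and bounded above, and let ω* := sup A. For α > 0 define G_α(λ) := (1/(2α)) · inf { ‖σ‖² : σ ∈ K(λ) } for λ ∈ A, and ω*_α := sup { λ − G_α(λ) : λ ∈ A }. Then: (i) for 0 < α₁ ≤ α₂ one has ω*_{α₁} ≤ ω*_{α₂}; (ii) ω*_α ≤ ω* for all α > 0; (iii) ω*_α → ω* as α → +∞. -/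
/-!
Since `G_α(λ) = m(λ) / (2α)` with `m(λ) ≥ 0`, the term `λ - G_α(λ)` is nondecreasing in `α`, bounded
above by `λ`, and tends to `λ` as `α → ∞`. Taking suprema over `A` gives monotonicity and the upper
bound by `sup A`. For the limit, any `a < sup A` lies below some `λ ∈ A`, hence below
`λ - G_α(λ) ≤ ω*_α` for all large `α`.
-/

/-- The admissible set `A = { λ ≥ 0 : K(λ) ≠ ∅ }`. -/
def admSet {H : Type*} (K : ℝ → Set H) : Set ℝ :=
  {lam : ℝ | 0 ≤ lam ∧ (K lam).Nonempty}

/-- The regularization term `G_α(λ) = (1/(2α)) · inf { ‖σ‖² : σ ∈ K(λ) }`. -/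
noncomputable def regG {H : Type*} [NormedAddCommGroup H] (K : ℝ → Set H)
    (α lam : ℝ) : ℝ :=
  (1 / (2 * α)) * sInf ((fun σ => ‖σ‖ ^ 2) '' K lam)

/-- The regularized safety factor `ω*_α = sup { λ − G_α(λ) : λ ∈ A }`. -/
noncomputable def omegaAlpha {H : Type*} [NormedAddCommGroup H] (K : ℝ → Set H)
    (α : ℝ) : ℝ :=
  sSup ((fun lam => lam - regG K α lam) '' admSet K)

lemma regG_inf_nonneg {H : Type*} [NormedAddCommGroup H] (K : ℝ → Set H) (lam : ℝ) :
    0 ≤ sInf ((fun σ => ‖σ‖ ^ 2) '' K lam) := by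
  apply Real.sInf_nonneg
  rintro _ ⟨σ, -, rfl⟩
  positivity

lemma regG_nonneg {H : Type*} [NormedAddCommGroup H] (K : ℝ → Set H) {α : ℝ} (hα : 0 < α)
    (lam : ℝ) : 0 ≤ regG K α lam :=
  mul_nonneg (by positivity) (regG_inf_nonneg K lam)

lemma regG_anti {H : Type*} [NormedAddCommGroup H] (K : ℝ → Set H) {α₁ α₂ : ℝ} (h₁ : 0 < α₁)
    (h : α₁ ≤ α₂) (lam : ℝ) : regG K α₂ lam ≤ regG K α₁ lam := by
  apply mul_le_mul_of_nonneg_right _ (regG_inf_nonneg K lam)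
  apply one_div_le_one_div_of_le <;> linarith

lemma tendsto_sub_regG {H : Type*} [NormedAddCommGroup H] (K : ℝ → Set H) (lam : ℝ) :
    Filter.Tendsto (fun α => lam - regG K α lam) Filter.atTop (nhds lam) := by
  have h : Filter.Tendsto (fun α : ℝ => 1 / (2 * α)) Filter.atTop (nhds 0) := by
    simp only [one_div]
    exact tendsto_inv_atTop_zero.comp (Filter.tendsto_id.const_mul_atTop two_pos)
  simpa [regG] using (h.mul_const (sInf ((fun σ => ‖σ‖ ^ 2) '' K lam))).const_sub lam

lemma sub_regG_le_sSup {H : Type*} [NormedAddCommGroup H] {K : ℝ → Set H}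
    (hbdd : BddAbove (admSet K)) {α : ℝ} (hα : 0 < α) {lam : ℝ} (hl : lam ∈ admSet K) :
    lam - regG K α lam ≤ sSup (admSet K) := by
  linarith [le_csSup hbdd hl, regG_nonneg K hα lam]

lemma sub_regG_le_omegaAlpha {H : Type*} [NormedAddCommGroup H] {K : ℝ → Set H}
    (hbdd : BddAbove (admSet K)) {α : ℝ} (hα : 0 < α) {lam : ℝ} (hl : lam ∈ admSet K) :
    lam - regG K α lam ≤ omegaAlpha K α := by
  refine le_csSup ⟨sSup (admSet K), ?_⟩ ⟨lam, hl, rfl⟩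
  rintro _ ⟨mu, hm, rfl⟩
  exact sub_regG_le_sSup hbdd hα hm

theorem stmt_18 {H : Type*} [NormedAddCommGroup H] [NormedSpace ℝ H]
    (K : ℝ → Set H)
    (hK : ∀ lam mu : ℝ, 0 ≤ lam → lam ≤ mu → K mu ⊆ K lam)
    (hA : (admSet K).Nonempty) (hbdd : BddAbove (admSet K)) :
    (∀ α₁ α₂ : ℝ, 0 < α₁ → α₁ ≤ α₂ → omegaAlpha K α₁ ≤ omegaAlpha K α₂) ∧
    (∀ α : ℝ, 0 < α → omegaAlpha K α ≤ sSup (admSet K)) ∧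
    Filter.Tendsto (fun α => omegaAlpha K α) Filter.atTop
      (nhds (sSup (admSet K))) := by
  have hle : ∀ α : ℝ, 0 < α → omegaAlpha K α ≤ sSup (admSet K) := by
    intro α hα
    apply csSup_le (hA.image _)
    rintro _ ⟨lam, hl, rfl⟩
    exact sub_regG_le_sSup hbdd hα hl
  refine ⟨?_, hle, ?_⟩
  · intro α₁ α₂ h₁ h
    apply csSup_le (hA.image _)
    rintro _ ⟨lam, hl, rfl⟩
    have h₂ := sub_regG_le_omegaAlpha hbdd (h₁.trans_le h) hl
    have h₃ := regG_anti K h₁ h lam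
    dsimp only
    linarith
  · rw [tendsto_order]
    constructor
    · intro a ha
      obtain ⟨lam, hl, hal⟩ := exists_lt_of_lt_csSup hA ha
      filter_upwards [(tendsto_sub_regG K lam).eventually (lt_mem_nhds hal),
        Filter.eventually_gt_atTop 0] with α h₁ hα
      exact h₁.trans_le (sub_regG_le_omegaAlpha hbdd hα hl)
    · intro a ha
      filter_upwards [Filter.eventually_gt_atTop 0] with α hα
      exact (hle α hα).trans_lt ha
end
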